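/- Let V be a finite set and f : 2^V → ℝ normalized, monotone and submodular. Let Y, P ⊆ V be nonempty sets such that f({y}) ≥ f({p}) for every y ∈ Y and p ∈ P. Then f(Y ∪ P) − f(Y) ≤ |P| · f(Y). -/

import Mathlib

/-!
Adding the elements of `T` to `Y` one at a time, diminishing returns bounds the gain of each `p ∈ T`
by its gain over `Y` itself. Submodularity and nonnegativity bound that gain by `f {p}`, and
`f {p} ≤ f {y} ≤ f Y` for any `y ∈ Y`. Summing over `T` gives the bound.
-/

section Submodular

variable {α V M : Type*}

/-- Submodular functions on a lattice; submodular set functions are the case `α = Finset V`. -/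
def IsSubmodular [Lattice α] [Add M] [LE M] (f : α → M) : Prop :=
  ∀ a b, f (a ⊔ b) + f (a ⊓ b) ≤ f a + f b

/-- The marginal gain of `b` over `a`, written `f_a(b)` in the literature. -/
def marginalGain [SemilatticeSup α] [Sub M] (f : α → M) (a b : α) : M :=
  f (a ⊔ b) - f a

theorem marginalGain_sup [SemilatticeSup α] [AddCommGroup M] (f : α → M) (a b c : α) :
    marginalGain f a (b ⊔ c) = marginalGain f a b + marginalGain f (a ⊔ b) c := by
  simp only [marginalGain, sup_assoc, sub_add_sub_cancel']

namespace IsSubmodular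

variable [AddCommGroup M] [PartialOrder M] [IsOrderedAddMonoid M]

section Lattice

variable [Lattice α] {f : α → M} {a b c : α}

theorem marginalGain_le_of_nonneg (hf : IsSubmodular f) (h : 0 ≤ f (a ⊓ b)) :
    marginalGain f a b ≤ f b :=
  sub_le_iff_le_add'.2 <| (le_add_of_nonneg_right h).trans (hf a b)

theorem marginalGain_le_marginalGain [IsModularLattice α] (hf : IsSubmodular f)
    (hca : c ≤ a) (habc : a ⊓ b ≤ c) : marginalGain f a b ≤ marginalGain f c b := by
  have hsup : a ⊔ (c ⊔ b) = a ⊔ b := by rw [← sup_assoc, sup_eq_left.2 hca]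
  have hinf : a ⊓ (c ⊔ b) = c := by
    rw [inf_comm, sup_inf_assoc_of_le b hca, inf_comm, sup_eq_left.2 habc]
  have hsub := hf a (c ⊔ b)
  rw [hsup, hinf] at hsub
  rwa [marginalGain, marginalGain, sub_le_sub_iff, add_comm (f (c ⊔ b))]

end Lattice

variable [DecidableEq V] {f : Finset V → M}

theorem marginalGain_le_sum (hf : IsSubmodular f) (Y T : Finset V) :
    marginalGain f Y T ≤ ∑ p ∈ T, marginalGain f Y {p} := by
  induction T using Finset.induction_on with
  | empty => simp [marginalGain]
  | insert p S hp ih =>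
    have hinter : (Y ∪ S) ∩ {p} ⊆ Y := by grind
    calc
      marginalGain f Y (insert p S) = marginalGain f Y S + marginalGain f (Y ∪ S) {p} := by
        rw [Finset.insert_eq, Finset.union_comm]
        exact marginalGain_sup f Y S {p}
      _ ≤ ∑ q ∈ S, marginalGain f Y {q} + marginalGain f Y {p} :=
        add_le_add ih (hf.marginalGain_le_marginalGain Finset.subset_union_left hinter)
      _ = ∑ q ∈ insert p S, marginalGain f Y {q} := by
        rw [Finset.sum_insert hp, add_comm]

end IsSubmodular

theorem marginal_gain_card_bound_general [DecidableEq V] [AddCommGroup M] [PartialOrder M]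
    [IsOrderedAddMonoid M] {f : Finset V → M} (hf : IsSubmodular f) (hnonneg : ∀ A, 0 ≤ f A)
    {Y T : Finset V} (hT : ∀ p ∈ T, f {p} ≤ f Y) :
    marginalGain f Y T ≤ T.card • f Y :=
  (hf.marginalGain_le_sum Y T).trans <| Finset.sum_le_card_nsmul _ _ _ fun p hp ↦
    (hf.marginalGain_le_of_nonneg (hnonneg _)).trans (hT p hp)

end Submodular

/-- If every singleton of `Y` has reward at least that of every singleton
of `T`, then the marginal gain of `T` over `Y` is at most `|T| · f(Y)`. -/
theorem marginal_gain_card_bound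
    {V : Type*} [Fintype V] [DecidableEq V]
    (f : Finset V → ℝ)
    (hf0 : f ∅ = 0)
    (hfmono : ∀ A B : Finset V, A ⊆ B → f A ≤ f B)
    (hfsub : ∀ A B : Finset V, f A + f B ≥ f (A ∪ B) + f (A ∩ B))
    (Y T : Finset V) (hY : Y.Nonempty) (hT : T.Nonempty)
    (hord : ∀ y ∈ Y, ∀ p ∈ T, f {y} ≥ f {p}) :
    f (Y ∪ T) - f Y ≤ (T.card : ℝ) * f Y := by
  obtain ⟨y, hy⟩ := hY
  have hnonneg A : 0 ≤ f A := hf0.ge.trans (hfmono ∅ A A.empty_subset)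
  have hT_le p (hp : p ∈ T) : f {p} ≤ f Y :=
    (hord y hy p hp).trans (hfmono {y} Y (Finset.singleton_subset_iff.2 hy))
  rw [← nsmul_eq_mul]
  exact marginal_gain_card_bound_general hfsub hnonneg hT_le
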